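/- arXiv:1309.6283 — 2 statements merged into one kernel-verified Lean document; each statement's English description precedes it below -/
import Mathlib

section
/- (i) If λ is a Borel probability measure on the compact space Γ(Ω,φ) that is invariant under the continuous map P ↦ V∘P, and T : X* → X* is represented by λ, then V∘T = T; in particular, if moreover T ∈ G(Ω,φ), then T belongs to the kernel L. (ii) Conversely, for every Q ∈ L there exists a Borel probability measure λ on Γ(Ω,φ), invariant under P ↦ V∘P, that represents Q. -/
open MeasureTheory Filter Topology

/-- The pairing `⟨f, μ⟩ = ∫ f dμ` of a function with a finite signed Borel measure,
defined via the Jordan decomposition of the signed measure. -/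
noncomputable def spair {Ω : Type*} [MeasurableSpace Ω] (f : Ω → ℝ) (μ : SignedMeasure Ω) : ℝ :=
  (∫ ω, f ω ∂μ.toJordanDecomposition.posPart) - (∫ ω, f ω ∂μ.toJordanDecomposition.negPart)

/-- The weak* topology on the space `X*` of finite signed Borel measures, i.e. the topology
of convergence of the pairings with all continuous functions `x ∈ C(Ω, ℝ)`. With this topology
on the codomain, the product topology on `SignedMeasure Ω → SignedMeasure Ω` is precisely the
weak* operator topology (pointwise convergence with `X*` in its weak* topology). -/
noncomputable instance weakStarTopology {Ω : Type*} [TopologicalSpace Ω] [MeasurableSpace Ω] :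
    TopologicalSpace (SignedMeasure Ω) :=
  TopologicalSpace.induced (fun μ => fun x : C(Ω, ℝ) => spair (⇑x) μ) inferInstance

/-- The operator `V : X* → X*`, pushforward by `φ`: `(Vμ)(e) = μ(φ⁻¹ e)`. -/
noncomputable def Vop {Ω : Type*} [MeasurableSpace Ω] (φ : Ω → Ω) :
    SignedMeasure Ω → SignedMeasure Ω :=
  fun μ => μ.map φ

/-- The Dirac measure at `ω`, as a signed measure. -/
noncomputable def diracSM {Ω : Type*} [MeasurableSpace Ω] (ω : Ω) : SignedMeasure Ω :=
  (Measure.dirac ω).toSignedMeasure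

/-- `Γ(Ω,φ)`: the closure of `{Vⁿ : n ≥ 0}` in the weak* operator topology. -/
def GammaSG {Ω : Type*} [TopologicalSpace Ω] [MeasurableSpace Ω] (φ : Ω → Ω) :
    Set (SignedMeasure Ω → SignedMeasure Ω) :=
  closure (Set.range fun n : ℕ => (Vop φ)^[n])

/-- `G(Ω,φ)`: the closure of the convex hull of `{Vⁿ : n ≥ 0}` in the weak* operator topology. -/
def GSG {Ω : Type*} [TopologicalSpace Ω] [MeasurableSpace Ω] (φ : Ω → Ω) :
    Set (SignedMeasure Ω → SignedMeasure Ω) :=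
  closure (convexHull ℝ (Set.range fun n : ℕ => (Vop φ)^[n]))

/-- The kernel `L = {Q ∈ G(Ω,φ) : V ∘ Q = Q}` of the semigroup `G(Ω,φ)`. -/
def Lker {Ω : Type*} [TopologicalSpace Ω] [MeasurableSpace Ω] (φ : Ω → Ω) :
    Set (SignedMeasure Ω → SignedMeasure Ω) :=
  {Q ∈ GSG φ | Vop φ ∘ Q = Q}

/-- The Ellis enveloping semigroup `E(Ω,φ)`: the closure of the iterates `{φⁿ : n ≥ 0}`
in the product topology (pointwise convergence) on `Ω → Ω`. -/
def EllisE {Ω : Type*} [TopologicalSpace Ω] (φ : Ω → Ω) : Set (Ω → Ω) :=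
  closure (Set.range fun n : ℕ => φ^[n])

/-- `E_b(Ω,φ)`: the smallest set of self-maps of `Ω` containing the iterates `{φⁿ : n ≥ 0}`
and sequentially closed under pointwise convergence. -/
inductive Eb {Ω : Type*} [TopologicalSpace Ω] (φ : Ω → Ω) : (Ω → Ω) → Prop
  | iterate (n : ℕ) : Eb φ φ^[n]
  | lim (p : ℕ → Ω → Ω) (q : Ω → Ω) (hp : ∀ k, Eb φ (p k))
      (hq : ∀ ω, Tendsto (fun k => p k ω) atTop (𝓝 (q ω))) : Eb φ q

/-- `E₁(Ω,φ)`: the set of pointwise limits of sequences of iterates `φ^{n_k}`. -/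
def E1SG {Ω : Type*} [TopologicalSpace Ω] (φ : Ω → Ω) : Set (Ω → Ω) :=
  {p | ∃ n : ℕ → ℕ, ∀ ω, Tendsto (fun k => φ^[n k] ω) atTop (𝓝 (p ω))}

/-- An operator `P ∈ Γ(Ω,φ)` with `p = πP` is regular if `p` is Borel measurable and
`(Pμ)(e) = μ(p⁻¹ e)` for every Borel probability measure `μ` and Borel set `e`. -/
def RegularOperator {Ω : Type*} [TopologicalSpace Ω] [MeasurableSpace Ω]
    (P : SignedMeasure Ω → SignedMeasure Ω) (p : Ω → Ω) : Prop :=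
  Measurable p ∧ ∀ (μ : Measure Ω) [IsProbabilityMeasure μ],
    ∀ e : Set Ω, MeasurableSet e → P μ.toSignedMeasure e = (μ (p ⁻¹' e)).toReal

/-- A minimal set of the semicascade `(Ω,φ)`: a nonempty closed `φ`-invariant set containing
no proper nonempty closed `φ`-invariant subset. -/
def IsMinimalSet {Ω : Type*} [TopologicalSpace Ω] (φ : Ω → Ω) (m : Set Ω) : Prop :=
  m.Nonempty ∧ IsClosed m ∧ Set.MapsTo φ m m ∧
    ∀ m' ⊆ m, m'.Nonempty → IsClosed m' → Set.MapsTo φ m' m' → m' = m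

/-- The orbit closure of a point `ω`: the closure of the trajectory `{φⁿ ω : n ≥ 0}`. -/
def orbitClosure {Ω : Type*} [TopologicalSpace Ω] (φ : Ω → Ω) (ω : Ω) : Set Ω :=
  closure (Set.range fun n : ℕ => φ^[n] ω)

/-- A `φ`-ergodic measure: a `φ`-invariant Borel probability measure `μ` such that
`μ(e) ∈ {0,1}` for every Borel set `e` with `φ⁻¹ e = e`. -/
def IsErgodicMeasure {Ω : Type*} [MeasurableSpace Ω] (φ : Ω → Ω) (μ : Measure Ω) : Prop :=
  IsProbabilityMeasure μ ∧ (∀ e : Set Ω, MeasurableSet e → μ (φ ⁻¹' e) = μ e) ∧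
    (∀ e : Set Ω, MeasurableSet e → φ ⁻¹' e = e → μ e = 0 ∨ μ e = 1)

/-- The support of a Borel measure: the smallest closed set of full measure
(the intersection of all closed sets of full measure). -/
def msupp {Ω : Type*} [TopologicalSpace Ω] [MeasurableSpace Ω] (μ : Measure Ω) : Set Ω :=
  ⋂₀ {s : Set Ω | IsClosed s ∧ μ sᶜ = 0}

/-- The semicascade `(Ω,φ)` is tame: for every continuous `x` and every strictly increasing
sequence `n(1) < n(2) < ⋯`, the infimum over finitely supported real coefficients `a` with
`Σ|aₖ| = 1` of the sup-norms `‖Σₖ aₖ · (x ∘ φ^{n(k)})‖` is `0`. -/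
def Tame {Ω : Type*} [TopologicalSpace Ω] [CompactSpace Ω] (φ : Ω → Ω)
    (hφ : Continuous φ) : Prop :=
  ∀ (x : C(Ω, ℝ)) (n : ℕ → ℕ), StrictMono n →
    sInf {r : ℝ | ∃ a : ℕ →₀ ℝ, (∑ k ∈ a.support, |a k|) = 1 ∧
      r = ‖∑ k ∈ a.support, a k • x.comp ⟨φ^[n k], hφ.iterate (n k)⟩‖} = 0

/-- Points `a, b` are proximal: `inf_{n ≥ 0} d(φⁿ a, φⁿ b) = 0`. -/
def Proximal {Ω : Type*} [PseudoMetricSpace Ω] (φ : Ω → Ω) (a b : Ω) : Prop :=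
  (⨅ n : ℕ, dist (φ^[n] a) (φ^[n] b)) = 0

/-- The Borel σ-algebra on the space of operators `X* → X*` with the weak* operator topology. -/
noncomputable instance funBorel {Ω : Type*} [TopologicalSpace Ω] [MeasurableSpace Ω] :
    MeasurableSpace (SignedMeasure Ω → SignedMeasure Ω) :=
  borel _

/-- A Borel probability measure `λ` on operators represents `T : X* → X*` if
`⟨x, Tμ⟩ = ∫_Γ ⟨x, Pμ⟩ dλ(P)` for all `x ∈ C(Ω,ℝ)` and `μ ∈ X*`. -/
def Represents {Ω : Type*} [TopologicalSpace Ω] [MeasurableSpace Ω]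
    (lam : Measure (SignedMeasure Ω → SignedMeasure Ω))
    (T : SignedMeasure Ω → SignedMeasure Ω) : Prop :=
  ∀ (x : C(Ω, ℝ)) (μ : SignedMeasure Ω),
    spair (⇑x) (T μ) = ∫ P, spair (⇑x) (P μ) ∂lam

variable {Ω : Type*} [TopologicalSpace Ω] [CompactSpace Ω] [TopologicalSpace.MetrizableSpace Ω]
  [Nonempty Ω] [MeasurableSpace Ω] [BorelSpace Ω]

/-!
By compactness of `Γ`, every point of the closed convex hull of `Γ`, in particular every `Q ∈ G`,
is the barycenter of a Borel probability measure on `Γ`. The map `P ↦ V ∘ P` is continuous, linear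
and preserves `Γ`, so each push-forward of a measure with barycenter `Q` has barycenter `V ∘ Q`.
When `V ∘ Q = Q` the Krylov–Bogoliubov averages of these push-forwards all have barycenter `Q`, and
so has any limit of them, which is an invariant measure. Conversely, the integral representing `T`
commutes with `P ↦ V ∘ P`, so invariance of the measure gives `V ∘ T = T`.
-/

open scoped NNReal

section InvariantMeasure

/-- The Krylov–Bogoliubov average of `μ`: the mean of its first `n` push-forwards under the iterates
of `s`, as a Birkhoff average in the space of finite measures (the zero measure for `n = 0`). -/
noncomputable def mapAverage {K : Type*} [MeasurableSpace K] (s : K → K) (n : ℕ)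
    (μ : FiniteMeasure K) : FiniteMeasure K :=
  birkhoffAverage ℝ≥0 (fun ν : FiniteMeasure K => ν.map s) id n μ

lemma map_mapAverage {K : Type*} [MeasurableSpace K] {s : K → K} (hs : Measurable s) (n : ℕ)
    (μ : FiniteMeasure K) : (mapAverage s n μ).map s = mapAverage s n (μ.map s) := by
  have h := map_birkhoffAverage ℝ≥0 ℝ≥0 (FiniteMeasure.mapHom hs)
    (fun ν : FiniteMeasure K => ν.map s) id n μ
  refine h.trans ?_
  simp only [mapAverage, birkhoffAverage, birkhoffSum, ← Function.iterate_succ_apply,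
    Function.iterate_succ_apply']
  rfl

variable {K : Type*} [TopologicalSpace K] [MeasurableSpace K] [BorelSpace K]

lemma integral_map_iterate {s : K → K} (hs : Continuous s) (f : C(K, ℝ)) (n : ℕ)
    (μ : FiniteMeasure K) :
    ∫ x, f x ∂((fun ν : FiniteMeasure K => ν.map s)^[n] μ : Measure K) =
      ∫ x, f (s^[n] x) ∂(μ : Measure K) := by
  induction n generalizing μ with
  | zero => rfl
  | succ n ih =>
    have hfs : Continuous fun x => f (s^[n] x) := f.continuous.comp (hs.iterate n)
    rw [Function.iterate_succ_apply, ih, FiniteMeasure.toMeasure_map,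
      integral_map hs.measurable.aemeasurable hfs.aestronglyMeasurable]
    rfl

variable [CompactSpace K]

lemma integrable_continuousMap (f : C(K, ℝ)) (μ : Measure K)
    [IsFiniteMeasure μ] : Integrable f μ :=
  (BoundedContinuousFunction.mkOfCompact f).integrable μ

lemma integral_mapAverage (s : K → K) (f : C(K, ℝ)) (n : ℕ) (μ : FiniteMeasure K) :
    ∫ x, f x ∂(mapAverage s n μ : Measure K) =
      birkhoffAverage ℝ (fun ν : FiniteMeasure K => ν.map s)
        (fun ν => ∫ x, f x ∂(ν : Measure K)) n μ := by
  let I : FiniteMeasure K →+ ℝ :=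
    { toFun := fun ν => ∫ x, f x ∂(ν : Measure K)
      map_zero' := integral_zero_measure _
      map_add' := fun ν ν' => integral_add_measure (integrable_continuousMap f _)
        (integrable_continuousMap f _) }
  exact map_birkhoffAverage ℝ≥0 ℝ I _ id n μ

lemma integral_mapAverage_of_forall_eq {s : K → K} (hs : Continuous s) {f : C(K, ℝ)}
    {μ : FiniteMeasure K}
    (hf : ∀ k, ∫ x, f (s^[k] x) ∂(μ : Measure K) = ∫ x, f x ∂(μ : Measure K)) {n : ℕ}
    (hn : n ≠ 0) :
    ∫ x, f x ∂(mapAverage s n μ : Measure K) = ∫ x, f x ∂(μ : Measure K) := by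
  have hn' : (n : ℝ) ≠ 0 := Nat.cast_ne_zero.2 hn
  simp only [integral_mapAverage, birkhoffAverage, birkhoffSum, integral_map_iterate hs, hf,
    Finset.sum_const, Finset.card_range, nsmul_eq_mul, smul_eq_mul]
  field_simp

lemma mass_mapAverage {s : K → K} (hs : Continuous s) (μ : FiniteMeasure K) {n : ℕ}
    (hn : n ≠ 0) : (mapAverage s n μ).mass = μ.mass := by
  have h := integral_mapAverage_of_forall_eq hs (f := 1) (μ := μ) (fun _ => rfl) hn
  simpa [FiniteMeasure.mass] using h

lemma tendsto_integral_comp_sub_integral_mapAverage {s : K → K} (hs : Continuous s) (f : C(K, ℝ))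
    (μ : FiniteMeasure K) :
    Tendsto (fun n => ∫ x, f (s x) ∂(mapAverage s n μ : Measure K) -
      ∫ x, f x ∂(mapAverage s n μ : Measure K)) atTop (𝓝 0) := by
  have hbdd : Bornology.IsBounded (Set.range fun n =>
      ∫ x, f x ∂((fun ν : FiniteMeasure K => ν.map s)^[n] μ : Measure K)) := by
    refine (Metric.isBounded_closedBall (x := (0 : ℝ)) (r := ‖f‖ * μ.mass)).subset ?_
    rintro _ ⟨n, rfl⟩
    simp only [integral_map_iterate hs]
    rw [mem_closedBall_zero_iff]
    exact norm_integral_le_of_norm_le_const (ae_of_all _ fun x => f.norm_coe_le_norm _)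
  refine (tendsto_birkhoffAverage_apply_sub_birkhoffAverage ℝ
    (g := fun ν : FiniteMeasure K => ∫ x, f x ∂(ν : Measure K)) hbdd).congr fun n => ?_
  rw [← integral_mapAverage, ← integral_mapAverage, ← map_mapAverage hs.measurable,
    FiniteMeasure.toMeasure_map, integral_map hs.measurable.aemeasurable
      f.continuous.aestronglyMeasurable]

variable [T2Space K]

lemma exists_tendsto_mapAverage {s : K → K} (hs : Continuous s) (μ : FiniteMeasure K) :
    ∃ ν, Tendsto (fun n => mapAverage s n μ) (hyperfilter ℕ) (𝓝 ν) := by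
  have hmem : ∀ᶠ n in (hyperfilter ℕ : Filter ℕ), (mapAverage s n μ).mass = μ.mass :=
    ((eventually_ne_atTop 0).mono fun _ hn => mass_mapAverage hs μ hn).filter_mono
      Nat.hyperfilter_le_atTop
  obtain ⟨ν, -, hν⟩ := (isCompact_setOfPred_finiteMeasure_eq_of_compactSpace K μ.mass
    ).ultrafilter_le_nhds' ((hyperfilter ℕ).map fun n => mapAverage s n μ) hmem
  exact ⟨ν, hν⟩

lemma exists_map_eq_self_of_forall_integral_comp_eq {s : K → K} (hs : Continuous s)
    (μ : Measure K) [IsFiniteMeasure μ] (h : ∀ f : C(K, ℝ), ∫ x, f (s x) ∂μ = ∫ x, f x ∂μ) :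
    ∃ ν : Measure K, IsFiniteMeasure ν ∧ ν.map s = ν ∧
      ∀ f : C(K, ℝ), ∫ x, f x ∂ν = ∫ x, f x ∂μ := by
  obtain ⟨ν, hreg, hfin, hν⟩ := μ.exists_regular_eq_of_compactSpace
  have hint (f : C(K, ℝ)) : ∫ x, f x ∂ν = ∫ x, f x ∂μ :=
    (hν (BoundedContinuousFunction.mkOfCompact f)).symm
  have : (ν.map s).InnerRegularCompactLTTop :=
    Measure.InnerRegularCompactLTTop.map_of_continuous hs
  refine ⟨ν, hfin, Measure.ext_of_integral_eq_on_compactlySupported fun f => ?_, hint⟩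
  rw [integral_map (f := f) hs.measurable.aemeasurable f.continuous.aestronglyMeasurable]
  calc ∫ x, f (s x) ∂ν = ∫ x, f (s x) ∂μ := hint (f.toContinuousMap.comp ⟨s, hs⟩)
    _ = ∫ x, f x ∂μ := h f.toContinuousMap
    _ = ∫ x, f x ∂ν := (hint f.toContinuousMap).symm

theorem exists_invariant_measure_integral_eq {s : K → K} (hs : Continuous s) (μ : Measure K)
    [IsFiniteMeasure μ] :
    ∃ ν : Measure K, IsFiniteMeasure ν ∧ ν.map s = ν ∧
      ∀ f : C(K, ℝ), (∀ n, ∫ x, f (s^[n] x) ∂μ = ∫ x, f x ∂μ) →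
        ∫ x, f x ∂ν = ∫ x, f x ∂μ := by
  let μ₀ : FiniteMeasure K := ⟨μ, inferInstance⟩
  obtain ⟨ν₀, hlim⟩ := exists_tendsto_mapAverage hs μ₀
  have hint (f : C(K, ℝ)) : Tendsto (fun n => ∫ x, f x ∂(mapAverage s n μ₀ : Measure K))
      (hyperfilter ℕ) (𝓝 (∫ x, f x ∂(ν₀ : Measure K))) :=
    ((FiniteMeasure.continuous_integral_continuousMap f).tendsto ν₀).comp hlim
  have hinv (f : C(K, ℝ)) : ∫ x, f (s x) ∂(ν₀ : Measure K) = ∫ x, f x ∂(ν₀ : Measure K) :=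
    sub_eq_zero.1 <| tendsto_nhds_unique ((hint (f.comp ⟨s, hs⟩)).sub (hint f)) <|
      (tendsto_integral_comp_sub_integral_mapAverage hs f μ₀).mono_left Nat.hyperfilter_le_atTop
  obtain ⟨ν, hfin, hmap, hν⟩ :=
    exists_map_eq_self_of_forall_integral_comp_eq hs (ν₀ : Measure K) hinv
  refine ⟨ν, hfin, hmap, fun f hf => (hν f).trans ?_⟩
  refine tendsto_nhds_unique (hint f) (tendsto_const_nhds.congr' ?_)
  filter_upwards [Nat.hyperfilter_le_atTop (eventually_ne_atTop 0)] with n hn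
  exact (integral_mapAverage_of_forall_eq (μ := μ₀) hs hf hn).symm

end InvariantMeasure

section Barycenter

variable {E : Type*} [AddCommGroup E] [Module ℝ E] [TopologicalSpace E] [MeasurableSpace E]

/-- The set of points of `E` that are the barycenter of some Borel probability measure on `K`,
i.e. whose value under each continuous linear functional is the average of that functional over
`K`. -/
def barycenters (K : Set E) : Set E :=
  {v | ∃ m : ProbabilityMeasure K, ∀ ℓ : E →L[ℝ] ℝ, ∫ p, ℓ p ∂(m : Measure K) = ℓ v}

lemma subset_barycenters [OpensMeasurableSpace E] (K : Set E) : K ⊆ barycenters K := fun v hv =>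
  ⟨⟨Measure.dirac ⟨v, hv⟩, inferInstance⟩, fun ℓ => by
    have hℓ : StronglyMeasurable fun p : K => ℓ p :=
      (ℓ.continuous.comp continuous_subtype_val).stronglyMeasurable
    exact integral_dirac' _ _ hℓ⟩

variable [BorelSpace E]

lemma convex_barycenters {K : Set E} (hK : IsCompact K) : Convex ℝ (barycenters K) := by
  have : CompactSpace K := isCompact_iff_compactSpace.1 hK
  rintro v ⟨m, hm⟩ w ⟨m', hm'⟩ a b ha hb hab
  lift a to ℝ≥0 using ha
  lift b to ℝ≥0 using hb
  have hab' : (a : ENNReal) + b = 1 := by exact_mod_cast hab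
  refine ⟨⟨a • (m : Measure K) + b • (m' : Measure K), ⟨by simpa using hab'⟩⟩, fun ℓ => ?_⟩
  have hint (μ : Measure K) [IsFiniteMeasure μ] : Integrable (fun p : K => ℓ p) μ :=
    integrable_continuousMap ((ℓ : C(E, ℝ)).restrict K) μ
  rw [ProbabilityMeasure.coe_mk, integral_add_measure (hint _) (hint _),
    integral_smul_nnreal_measure, integral_smul_nnreal_measure, hm, hm', map_add, map_smul,
    map_smul]
  rfl

lemma isClosed_barycenters [T2Space E] {K : Set E} (hK : IsCompact K) :
    IsClosed (barycenters K) := by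
  have : CompactSpace K := isCompact_iff_compactSpace.1 hK
  have hgraph : IsClosed {q : ProbabilityMeasure K × E |
      ∀ ℓ : E →L[ℝ] ℝ, ∫ p, ℓ p ∂(q.1 : Measure K) = ℓ q.2} := by
    simp only [Set.ofPred_forall]
    refine isClosed_iInter fun ℓ => isClosed_eq ?_ (ℓ.continuous.comp continuous_snd)
    exact (ProbabilityMeasure.continuous_integral_continuousMap
      ((ℓ : C(E, ℝ)).restrict K)).comp continuous_fst
  convert isClosedMap_snd_of_compactSpace _ hgraph
  ext v
  simp [barycenters]

theorem closure_convexHull_subset_barycenters [T2Space E] {K : Set E} (hK : IsCompact K) :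
    closure (convexHull ℝ K) ⊆ barycenters K :=
  closure_minimal (convexHull_min (subset_barycenters K) (convex_barycenters hK))
    (isClosed_barycenters hK)

theorem exists_invariant_probability_barycenter [T2Space E] {K : Set E} (hK : IsCompact K)
    {S : E →L[ℝ] E} (hS : Set.MapsTo S K K) {v : E} (hv : v ∈ closure (convexHull ℝ K))
    (hSv : S v = v) :
    ∃ m : Measure E, IsProbabilityMeasure m ∧ m Kᶜ = 0 ∧ m.map S = m ∧
      ∀ ℓ : E →L[ℝ] ℝ, ∫ p, ℓ p ∂m = ℓ v := by
  have : CompactSpace K := isCompact_iff_compactSpace.1 hK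
  obtain ⟨m₀, hm₀⟩ := closure_convexHull_subset_barycenters hK hv
  let s : K → K := hS.restrict S K K
  have hs : Continuous s := S.continuous.restrict hS
  obtain ⟨m, _, hmap, hm⟩ := exists_invariant_measure_integral_eq hs (m₀ : Measure K)
  have hiter (n : ℕ) (ℓ : E →L[ℝ] ℝ) : ∫ p : K, ℓ (S^[n] p) ∂(m₀ : Measure K) = ℓ v := by
    induction n generalizing ℓ with
    | zero => exact hm₀ ℓ
    | succ n ih =>
      simp only [Function.iterate_succ_apply']
      exact (ih (ℓ.comp S)).trans (congrArg ℓ hSv)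
  have hbary (ℓ : E →L[ℝ] ℝ) : ∫ p : K, ℓ p ∂m = ℓ v := by
    refine (hm ((ℓ : C(E, ℝ)).restrict K) fun n => ?_).trans (hm₀ ℓ)
    simp only [s, hS.iterate_restrict]
    exact (hiter n ℓ).trans (hm₀ ℓ).symm
  have hprob : IsProbabilityMeasure m :=
    isProbabilityMeasure_iff_real.2 (by simpa using hm 1 fun _ => rfl)
  have hval : Measurable (Subtype.val : K → E) := measurable_subtype_coe
  refine ⟨m.map Subtype.val, Measure.isProbabilityMeasure_map hval.aemeasurable, ?_, ?_,
    fun ℓ => ?_⟩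
  · rw [Measure.map_apply hval hK.measurableSet.compl]
    simp
  · rw [Measure.map_map S.continuous.measurable hval]
    conv_rhs => rw [← hmap, Measure.map_map hval hs.measurable]
    rfl
  · rw [integral_map hval.aemeasurable ℓ.continuous.aestronglyMeasurable, hbary]

end Barycenter

section WeakStar

variable {X : Type*} [TopologicalSpace X] [MeasurableSpace X]

lemma continuous_spair (f : C(X, ℝ)) : Continuous fun μ : SignedMeasure X => spair f μ :=
  (continuous_apply f).comp
    (continuous_induced_dom (f := fun (μ : SignedMeasure X) (g : C(X, ℝ)) => spair g μ))

lemma continuous_signedMeasure_iff {Y : Type*} [TopologicalSpace Y] {g : Y → SignedMeasure X} :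
    Continuous g ↔ ∀ f : C(X, ℝ), Continuous fun y => spair f (g y) :=
  continuous_induced_rng.trans continuous_pi_iff

instance : BorelSpace (SignedMeasure X → SignedMeasure X) := ⟨rfl⟩

variable [BorelSpace X] [CompactSpace X]

lemma integrable_continuousMap_signedMeasure (f : C(X, ℝ)) (μ : SignedMeasure X) :
    μ.Integrable f := by
  have hint (ν : Measure X) [IsFiniteMeasure ν] : ν.toSignedMeasure.Integrable f := by
    rw [VectorMeasure.Integrable, Measure.variation_toSignedMeasure]
    exact integrable_continuousMap f ν
  rw [← μ.toSignedMeasure_toJordanDecomposition]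
  exact (hint _).sub_vectorMeasure (hint _)

lemma spair_eq_integral (f : C(X, ℝ)) (μ : SignedMeasure X) : spair f μ = ∫ᵛ x, f x ∂<•μ := by
  conv_rhs => rw [← μ.toSignedMeasure_toJordanDecomposition, JordanDecomposition.toSignedMeasure]
  rw [VectorMeasure.integral_sub_vectorMeasure (integrable_continuousMap_signedMeasure f _)
    (integrable_continuousMap_signedMeasure f _), VectorMeasure.integral_toSignedMeasure,
    VectorMeasure.integral_toSignedMeasure, spair]

/-- The pairing with `f ∈ C(X, ℝ)` as a weak* continuous linear functional on signed measures. -/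
noncomputable def spairCLM (f : C(X, ℝ)) : SignedMeasure X →L[ℝ] ℝ where
  toFun μ := spair f μ
  map_add' μ ν := by
    simp only [spair_eq_integral, VectorMeasure.integral_add_vectorMeasure
      (integrable_continuousMap_signedMeasure f μ) (integrable_continuousMap_signedMeasure f ν)]
  map_smul' c μ := by
    simp only [spair_eq_integral, VectorMeasure.integral_smul_vectorMeasure, RingHom.id_apply]
  cont := continuous_spair f

@[simp] lemma spairCLM_apply (f : C(X, ℝ)) (μ : SignedMeasure X) : spairCLM f μ = spair f μ := rfl

lemma spair_toSignedMeasure (f : C(X, ℝ)) (μ : Measure X) [IsFiniteMeasure μ] :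
    spair f μ.toSignedMeasure = ∫ x, f x ∂μ := by
  rw [spair_eq_integral, VectorMeasure.integral_toSignedMeasure]

lemma spair_Vop {φ : X → X} (hφ : Continuous φ) (f : C(X, ℝ)) (μ : SignedMeasure X) :
    spair f (Vop φ μ) = spair (f.comp ⟨φ, hφ⟩) μ := by
  rw [spair_eq_integral, spair_eq_integral, Vop, VectorMeasure.integral_map hφ.measurable
    f.continuous.aestronglyMeasurable (integrable_continuousMap_signedMeasure (f.comp ⟨φ, hφ⟩) μ)]
  rfl

/-- The push-forward operator `V` as a weak* continuous linear map. -/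
noncomputable def vopCLM {φ : X → X} (hφ : Continuous φ) :
    SignedMeasure X →L[ℝ] SignedMeasure X where
  toLinearMap := VectorMeasure.mapₗ φ
  cont := continuous_signedMeasure_iff.2 fun f =>
    (continuous_spair (f.comp ⟨φ, hφ⟩)).congr fun μ => (spair_Vop hφ f μ).symm

/-- The left translation `P ↦ V ∘ P` of the space of operators, as a continuous linear map for the
weak* operator topology. -/
noncomputable def vopCompCLM {φ : X → X} (hφ : Continuous φ) :
    (SignedMeasure X → SignedMeasure X) →L[ℝ] (SignedMeasure X → SignedMeasure X) :=
  ContinuousLinearMap.pi fun μ => (vopCLM hφ).comp (ContinuousLinearMap.proj μ)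

/-- The differences of two positive measures of mass at most `c`: weak* compact sets that are
preserved by push-forward and exhaust the space of signed measures. -/
def massBall (X : Type*) [MeasurableSpace X] (c : ℝ≥0) : Set (SignedMeasure X) :=
  {μ | ∃ p n : FiniteMeasure X, p.mass ≤ c ∧ n.mass ≤ c ∧
    (p : Measure X).toSignedMeasure - (n : Measure X).toSignedMeasure = μ}

lemma exists_mem_massBall {X : Type*} [MeasurableSpace X] (μ : SignedMeasure X) :
    ∃ c, μ ∈ massBall X c :=
  let p : FiniteMeasure X := ⟨μ.toJordanDecomposition.posPart, inferInstance⟩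
  let n : FiniteMeasure X := ⟨μ.toJordanDecomposition.negPart, inferInstance⟩
  ⟨max p.mass n.mass, p, n, le_max_left _ _, le_max_right _ _,
    μ.toSignedMeasure_toJordanDecomposition⟩

lemma mapsTo_Vop_massBall {X : Type*} [MeasurableSpace X] {φ : X → X} (hφ : Measurable φ)
    (c : ℝ≥0) : Set.MapsTo (Vop φ) (massBall X c) (massBall X c) := by
  rintro _ ⟨p, n, hp, hn, rfl⟩
  refine ⟨p.map φ, n.map φ, (p.mass_map_le φ).trans hp, (n.mass_map_le φ).trans hn, ?_⟩
  ext i hi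
  simp [Vop, VectorMeasure.map_apply _ hφ hi, hφ hi, hi, map_measureReal_apply hφ hi]

lemma isCompact_massBall [T2Space X] (c : ℝ≥0) : IsCompact (massBall X c) := by
  have hc := isCompact_setOfPred_finiteMeasure_le_of_compactSpace X c
  have hcont : Continuous fun q : FiniteMeasure X × FiniteMeasure X =>
      (q.1 : Measure X).toSignedMeasure - (q.2 : Measure X).toSignedMeasure := by
    refine continuous_signedMeasure_iff.2 fun f => ?_
    simp only [← spairCLM_apply, map_sub]
    simp only [spairCLM_apply, spair_toSignedMeasure]
    exact ((FiniteMeasure.continuous_integral_continuousMap f).comp continuous_fst).sub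
      ((FiniteMeasure.continuous_integral_continuousMap f).comp continuous_snd)
  convert (hc.prod hc).image hcont
  ext μ
  simp [massBall, and_assoc]

variable [HasOuterApproxClosed X]

lemma eq_of_forall_spair_eq {μ ν : SignedMeasure X} (h : ∀ f : C(X, ℝ), spair f μ = spair f ν) :
    μ = ν := by
  have hzero (f : C(X, ℝ)) : spair f (μ - ν) = 0 := by
    rw [← spairCLM_apply, map_sub, spairCLM_apply, spairCLM_apply, h, sub_self]
  have hparts : (μ - ν).toJordanDecomposition.posPart = (μ - ν).toJordanDecomposition.negPart :=
    ext_of_forall_integral_eq_of_IsFiniteMeasure fun f => sub_eq_zero.1 (hzero f.toContinuousMap)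
  rw [← sub_eq_zero, ← (μ - ν).toSignedMeasure_toJordanDecomposition,
    JordanDecomposition.toSignedMeasure, sub_eq_zero]
  exact Measure.toSignedMeasure_congr hparts

instance : T2Space (SignedMeasure X) :=
  T2Space.of_injective_continuous (fun _ _ h => eq_of_forall_spair_eq (congrFun h))
    continuous_induced_dom

end WeakStar

section Kernel

variable {X : Type*} [TopologicalSpace X] [MeasurableSpace X] {φ : X → X}

lemma GSG_subset_closure_convexHull_GammaSG : GSG φ ⊆ closure (convexHull ℝ (GammaSG φ)) :=
  closure_mono (convexHull_mono subset_closure)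

variable [BorelSpace X] [CompactSpace X]

lemma mapsTo_vopCompCLM_GammaSG (hφ : Continuous φ) :
    Set.MapsTo (vopCompCLM hφ) (GammaSG φ) (GammaSG φ) := by
  refine Set.MapsTo.closure ?_ (vopCompCLM hφ).continuous
  rintro _ ⟨n, rfl⟩
  exact ⟨n + 1, Function.iterate_succ' _ _⟩

variable [HasOuterApproxClosed X]

lemma isCompact_GammaSG [T2Space X] (hφ : Continuous φ) : IsCompact (GammaSG φ) := by
  choose c hc using exists_mem_massBall (X := X)
  refine (isCompact_univ_pi fun μ => isCompact_massBall (c μ)).closure_of_subset ?_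
  rintro _ ⟨n, rfl⟩ μ -
  exact (mapsTo_Vop_massBall hφ.measurable (c μ)).iterate n (hc μ)

theorem Vop_comp_eq_of_represents (hφ : Continuous φ)
    {lam : Measure (SignedMeasure X → SignedMeasure X)}
    (hlam : lam.map (fun T => Vop φ ∘ T) = lam) {T : SignedMeasure X → SignedMeasure X}
    (hT : Represents lam T) : Vop φ ∘ T = T := by
  refine funext fun μ => eq_of_forall_spair_eq fun f => ?_
  have hf : Continuous fun P : SignedMeasure X → SignedMeasure X => spair f (P μ) :=
    (continuous_spair f).comp (continuous_apply μ)
  calc spair f (Vop φ (T μ)) = spair (f.comp ⟨φ, hφ⟩) (T μ) := spair_Vop hφ f _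
    _ = ∫ P, spair (f.comp ⟨φ, hφ⟩) (P μ) ∂lam := hT _ μ
    _ = ∫ P, spair f ((Vop φ ∘ P) μ) ∂lam := by simp only [Function.comp_apply, spair_Vop hφ]
    _ = ∫ P, spair f (P μ) ∂(lam.map fun T => Vop φ ∘ T) :=
      (integral_map (vopCompCLM hφ).continuous.measurable.aemeasurable
        hf.aestronglyMeasurable).symm
    _ = spair f (T μ) := by rw [hlam, hT]

theorem exists_invariant_represents [T2Space X] (hφ : Continuous φ)
    {Q : SignedMeasure X → SignedMeasure X} (hQ : Q ∈ Lker φ) :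
    ∃ lam : Measure (SignedMeasure X → SignedMeasure X), IsProbabilityMeasure lam ∧
      lam (GammaSG φ)ᶜ = 0 ∧ lam.map (fun T => Vop φ ∘ T) = lam ∧ Represents lam Q := by
  obtain ⟨lam, hprob, hsupp, hinv, hbary⟩ := exists_invariant_probability_barycenter
    (isCompact_GammaSG hφ) (mapsTo_vopCompCLM_GammaSG hφ)
    (GSG_subset_closure_convexHull_GammaSG hQ.1) hQ.2
  exact ⟨lam, hprob, hsupp, hinv, fun f μ =>
    (hbary ((spairCLM f).comp (ContinuousLinearMap.proj μ))).symm⟩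

end Kernel

theorem stmt_4_general {X : Type*} [TopologicalSpace X] [CompactSpace X] [T2Space X]
    [HasOuterApproxClosed X] [MeasurableSpace X] [BorelSpace X] (φ : X → X) (hφ : Continuous φ) :
    (∀ lam : Measure (SignedMeasure X → SignedMeasure X),
      lam.map (fun T => Vop φ ∘ T) = lam →
      ∀ T : SignedMeasure X → SignedMeasure X, Represents lam T →
        Vop φ ∘ T = T ∧ (T ∈ GSG φ → T ∈ Lker φ)) ∧
    (∀ Q ∈ Lker φ, ∃ lam : Measure (SignedMeasure X → SignedMeasure X),
      IsProbabilityMeasure lam ∧ lam (GammaSG φ)ᶜ = 0 ∧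
      lam.map (fun T => Vop φ ∘ T) = lam ∧ Represents lam Q) := by
  refine ⟨fun lam hinv T hT => ?_, fun Q hQ => exists_invariant_represents hφ hQ⟩
  have hVT : Vop φ ∘ T = T := Vop_comp_eq_of_represents hφ hinv hT
  exact ⟨hVT, fun hG => ⟨hG, hVT⟩⟩

/-- Lemma 1.8: (i) if `λ` is a Borel probability measure on `Γ(Ω,φ)` invariant under
`P ↦ V ∘ P` and `T` is represented by `λ`, then `V ∘ T = T`; in particular `T ∈ G(Ω,φ)`
implies `T ∈ L`. (ii) Conversely, every `Q ∈ L` is represented by some such invariant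
probability measure on `Γ(Ω,φ)`. -/
theorem stmt_4 (φ : Ω → Ω) (hφ : Continuous φ) :
    (∀ lam : Measure (SignedMeasure Ω → SignedMeasure Ω), IsProbabilityMeasure lam →
      lam (GammaSG φ)ᶜ = 0 →
      lam.map (fun T => Vop φ ∘ T) = lam →
      ∀ T : SignedMeasure Ω → SignedMeasure Ω, Represents lam T →
        Vop φ ∘ T = T ∧ (T ∈ GSG φ → T ∈ Lker φ)) ∧
    (∀ Q ∈ Lker φ, ∃ lam : Measure (SignedMeasure Ω → SignedMeasure Ω),
      IsProbabilityMeasure lam ∧ lam (GammaSG φ)ᶜ = 0 ∧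
      lam.map (fun T => Vop φ ∘ T) = lam ∧ Represents lam Q) :=
  have h := stmt_4_general φ hφ
  ⟨fun lam _ _ => h.1 lam, h.2⟩
end

section
/- If E(Ω,φ) = E_1(Ω,φ) (which holds in particular whenever the semicascade (Ω,φ) is tame), then the closure of the union of all minimal sets of (Ω,φ) equals the closure of the union of the supports of all φ-ergodic Borel probability measures (the minimal attraction center). -/
open MeasureTheory Filter Topology

variable {Ω : Type*} [TopologicalSpace Ω] [CompactSpace Ω] [TopologicalSpace.MetrizableSpace Ω]
  [Nonempty Ω] [MeasurableSpace Ω] [BorelSpace Ω]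

/-!
A minimal set of the map `p ↦ φ ∘ p` on `E(Ω,φ)` is carried by every evaluation onto a minimal set
of `(Ω,φ)`, so any `p` in it takes all its values in minimal sets. If `E = E₁`, then `p` is a
pointwise limit of a sequence of iterates, hence by dominated convergence it preserves every
invariant probability measure, which therefore lives on the closure of the union of the minimal
sets. Conversely, every minimal set carries an ergodic measure (an extreme point of the compact
convex set of invariant measures on it), whose support is closed and invariant, hence the whole
minimal set.
-/

section MinimalSets

variable {X Y : Type*} [TopologicalSpace X] [TopologicalSpace Y] {T : X → X} {φ : Y → Y}

theorem isMinimalSet_iff_minimal {m : Set X} :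
    IsMinimalSet T m ↔ Minimal (fun s => s.Nonempty ∧ IsClosed s ∧ Set.MapsTo T s s) m := by
  constructor
  · rintro ⟨hne, hcl, hmaps, hmin⟩
    exact ⟨⟨hne, hcl, hmaps⟩, fun s ⟨hs, hscl, hsmaps⟩ hsm => (hmin s hsm hs hscl hsmaps).ge⟩
  · rintro ⟨⟨hne, hcl, hmaps⟩, hmin⟩
    exact ⟨hne, hcl, hmaps, fun s hsm hs hscl hsmaps =>
      hsm.antisymm (hmin ⟨hs, hscl, hsmaps⟩ hsm)⟩

theorem exists_isMinimalSet_subset [CompactSpace X] {K : Set X} (hK : IsClosed K)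
    (hne : K.Nonempty) (hmaps : Set.MapsTo T K K) : ∃ m ⊆ K, IsMinimalSet T m := by
  simp only [isMinimalSet_iff_minimal]
  refine zorn_superset_nonempty {s | s.Nonempty ∧ IsClosed s ∧ Set.MapsTo T s s} ?_ K
    ⟨hne, hK, hmaps⟩
  intro c hc hchain hcne
  have : Nonempty c := hcne.to_subtype
  have hcl : ∀ s ∈ c, IsClosed s := fun s hs => (hc hs).2.1
  have hdir : DirectedOn (· ⊇ ·) c := fun s hs t ht => (hchain.total hs ht).elim
    (fun hst => ⟨s, hs, subset_rfl, hst⟩) (fun hts => ⟨t, ht, hts, subset_rfl⟩)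
  refine ⟨⋂₀ c, ⟨?_, isClosed_sInter hcl, ?_⟩, fun s => Set.sInter_subset_of_mem⟩
  · exact IsCompact.nonempty_sInter_of_directed_nonempty_isCompact_isClosed
      hdir (fun s hs => (hc hs).1) (fun s hs => (hcl s hs).isCompact) hcl
  · exact fun x hx s hs => (hc hs).2.2 (hx s hs)

theorem IsMinimalSet.image [CompactSpace X] [T2Space Y] {g : X → Y} {m : Set X}
    (hm : IsMinimalSet T m) (hg : Continuous g) (hsemi : Function.Semiconj g T φ) :
    IsMinimalSet φ (g '' m) := by
  obtain ⟨hne, hcl, hmaps, hmin⟩ := hm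
  refine ⟨hne.image g, (hcl.isCompact.image hg).isClosed, hsemi.mapsTo_image hmaps, ?_⟩
  intro s hsub ⟨y, hy⟩ hscl hsmaps
  obtain ⟨x, hx, rfl⟩ := hsub hy
  have hpre : m ∩ g ⁻¹' s = m :=
    hmin _ Set.inter_subset_left ⟨x, hx, hy⟩ (hcl.inter (hscl.preimage hg))
      (hmaps.inter_inter (hsemi.mapsTo_preimage hsmaps))
  exact hsub.antisymm (Set.image_subset_iff.2 (Set.inter_eq_left.1 hpre))

theorem mapsTo_comp_ellisE (hφ : Continuous φ) :
    Set.MapsTo (φ ∘ ·) (EllisE φ) (EllisE φ) := by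
  refine Set.MapsTo.closure ?_ (continuous_pi fun y => hφ.comp (continuous_apply y))
  rintro _ ⟨n, rfl⟩
  exact ⟨n + 1, Function.iterate_succ' φ n⟩

-- The witness lies in a minimal left ideal of the enveloping semigroup.
theorem exists_mem_ellisE_forall_mem_isMinimalSet [CompactSpace Y] [T2Space Y]
    (hφ : Continuous φ) : ∃ p ∈ EllisE φ, ∀ y, p y ∈ ⋃₀ {m | IsMinimalSet φ m} := by
  obtain ⟨I, hI, hmin⟩ := exists_isMinimalSet_subset isClosed_closure
    (Set.range_nonempty fun n : ℕ => φ^[n]).closure (mapsTo_comp_ellisE hφ)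
  obtain ⟨p, hp⟩ := hmin.1
  refine ⟨p, hI hp, fun y => ⟨(· y) '' I, ?_, p, hp, rfl⟩⟩
  exact hmin.image (continuous_apply y) fun _ => rfl

end MinimalSets

section InvariantMeasures

variable {X Y : Type*} [MeasurableSpace X] [TopologicalSpace Y] [MeasurableSpace Y]
  {μ : Measure X} {ν : Measure Y} {f : X → Y}

open scoped BoundedContinuousFunction

theorem measurePreserving_of_forall_integral_comp_eq [BorelSpace Y] [HasOuterApproxClosed Y]
    [IsFiniteMeasure μ] [IsFiniteMeasure ν] (hf : Measurable f)
    (h : ∀ g : Y →ᵇ ℝ, ∫ x, g (f x) ∂μ = ∫ y, g y ∂ν) : MeasurePreserving f μ ν := by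
  refine ⟨hf, ext_of_forall_integral_eq_of_IsFiniteMeasure fun g => ?_⟩
  rw [integral_map hf.aemeasurable
    g.continuous.measurable.stronglyMeasurable.aestronglyMeasurable, h g]

theorem measurePreserving_of_tendsto [BorelSpace Y] [TopologicalSpace.PseudoMetrizableSpace Y]
    [IsFiniteMeasure μ] {ι : Type*} {l : Filter ι} [l.NeBot]
    [l.IsCountablyGenerated] {F : ι → X → Y} (hF : ∀ i, MeasurePreserving (F i) μ ν)
    (hlim : ∀ x, Tendsto (F · x) l (𝓝 (f x))) : MeasurePreserving f μ ν := by
  have : IsFiniteMeasure ν := (hF l.nonempty_of_neBot.some).map_eq ▸ inferInstance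
  have hf : Measurable f :=
    measurable_of_tendsto_metrizable' l (fun i => (hF i).measurable) (tendsto_pi_nhds.2 hlim)
  refine measurePreserving_of_forall_integral_comp_eq hf fun g => ?_
  have hg : Measurable g := g.continuous.measurable
  have htendsto : Tendsto (fun i => ∫ x, g (F i x) ∂μ) l (𝓝 (∫ x, g (f x) ∂μ)) := by
    refine tendsto_integral_filter_of_dominated_convergence (fun _ => ‖g‖) ?_ ?_
      (integrable_const _) ?_
    · exact .of_forall fun i => (hg.comp (hF i).measurable).aestronglyMeasurable
    · exact .of_forall fun i => .of_forall fun x => g.norm_coe_le_norm (F i x)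
    · exact .of_forall fun x => (g.continuous.tendsto (f x)).comp (hlim x)
  have hconst : ∀ i, ∫ x, g (F i x) ∂μ = ∫ y, g y ∂ν := fun i => by
    rw [← (hF i).map_eq, integral_map (hF i).aemeasurable hg.aestronglyMeasurable]
  simp only [hconst] at htendsto
  exact tendsto_nhds_unique htendsto tendsto_const_nhds

theorem measurePreserving_of_mem_E1SG [BorelSpace Y] [TopologicalSpace.PseudoMetrizableSpace Y]
    [IsFiniteMeasure ν] {φ p : Y → Y} (hφ : MeasurePreserving φ ν ν) (hp : p ∈ E1SG φ) :
    MeasurePreserving p ν ν := by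
  obtain ⟨n, hn⟩ := hp
  exact measurePreserving_of_tendsto (fun k => hφ.iterate (n k)) hn

theorem support_subset_closure_of_measurePreserving [OpensMeasurableSpace Y]
    (hf : MeasurePreserving f μ ν) {s : Set Y} (hs : ∀ᵐ x ∂μ, f x ∈ s) : ν.support ⊆ closure s := by
  refine Measure.support_subset_of_isClosed isClosed_closure ?_
  rw [← hf.map_eq, mem_ae_map_iff hf.aemeasurable isClosed_closure.measurableSet]
  exact hs.mono fun x hx => subset_closure hx

theorem mapsTo_support_of_measurePreserving [TopologicalSpace X] [OpensMeasurableSpace Y]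
    (hf : MeasurePreserving f μ ν) (hcont : Continuous f) :
    Set.MapsTo f μ.support ν.support := by
  intro x hx
  rw [Measure.mem_support_iff_forall] at hx ⊢
  intro U hU
  have hpre : f ⁻¹' interior U ∈ 𝓝 x := hcont.continuousAt (interior_mem_nhds.2 hU)
  calc 0 < μ (f ⁻¹' interior U) := hx _ hpre
    _ = ν (interior U) := hf.measure_preimage isOpen_interior.nullMeasurableSet
    _ ≤ ν U := measure_mono interior_subset

theorem IsMinimalSet.support_eq [HereditarilyLindelofSpace Y] [OpensMeasurableSpace Y]
    {φ : Y → Y} {m : Set Y} (hm : IsMinimalSet φ m) (hφ : Continuous φ)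
    (hν : MeasurePreserving φ ν ν) (hne : ν ≠ 0) (hsupp : ν mᶜ = 0) : ν.support = m :=
  hm.2.2.2 _ (Measure.support_subset_of_isClosed hm.2.1 hsupp) (Measure.nonempty_support hne)
    Measure.isClosed_support (mapsTo_support_of_measurePreserving hν hφ)

theorem msupp_eq_support (ν : Measure Y) : msupp ν = ν.support :=
  Measure.support_eq_sInter.symm

theorem isErgodicMeasure_iff {φ : X → X} (hφ : Measurable φ) :
    IsErgodicMeasure φ μ ↔ IsProbabilityMeasure μ ∧ Ergodic φ μ := by
  constructor
  · rintro ⟨hprob, hinv, hzeroOne⟩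
    refine ⟨hprob, ⟨hφ, Measure.ext fun s hs => ?_⟩, ⟨fun s hs hpre => ?_⟩⟩
    · rw [Measure.map_apply hφ hs, hinv s hs]
    · rw [eventuallyConst_set]
      exact (hzeroOne s hs hpre).symm.imp (mem_ae_iff_prob_eq_one hs).2
        measure_eq_zero_iff_ae_notMem.1
  · rintro ⟨hprob, herg⟩
    exact ⟨hprob, fun s hs => herg.measure_preimage hs.nullMeasurableSet,
      fun s hs => herg.prob_eq_zero_or_one hs⟩

end InvariantMeasures

section ErgodicExistence

variable {X : Type*} [MeasurableSpace X] {φ : X → X}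

open scoped NNReal ENNReal BoundedContinuousFunction

theorem isProbabilityMeasure_birkhoffAverage_dirac {n : ℕ} (hn : n ≠ 0) (x : X) :
    IsProbabilityMeasure (birkhoffAverage ℝ≥0 φ Measure.dirac n x) := by
  constructor
  simp only [birkhoffAverage, birkhoffSum, Measure.smul_apply, Measure.finsetSum_apply,
    measure_univ, Finset.sum_const, Finset.card_range, nsmul_eq_mul, mul_one]
  rw [ENNReal.smul_def, ENNReal.coe_inv (Nat.cast_ne_zero.2 hn), ENNReal.coe_natCast, smul_eq_mul]
  exact ENNReal.inv_mul_cancel (Nat.cast_ne_zero.2 hn) (ENNReal.natCast_ne_top n)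

theorem integral_birkhoffAverage_dirac {g : X → ℝ} (hg : StronglyMeasurable g) (n : ℕ) (x : X) :
    ∫ y, g y ∂(birkhoffAverage ℝ≥0 φ Measure.dirac n x) = birkhoffAverage ℝ φ g n x := by
  rw [birkhoffAverage, birkhoffSum, integral_smul_nnreal_measure,
    integral_finsetSum_measure fun i _ => integrable_dirac' hg enorm_lt_top]
  simp only [integral_dirac' _ _ hg, birkhoffAverage, birkhoffSum, NNReal.smul_def,
    NNReal.coe_inv, NNReal.coe_natCast]

theorem birkhoffAverage_comp_self {α : Type*} (f : α → α) (g : α → ℝ) (n : ℕ) (x : α) :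
    birkhoffAverage ℝ f (g ∘ f) n x = birkhoffAverage ℝ f g n (f x) := by
  simp only [birkhoffAverage, birkhoffSum, Function.comp_apply, ← Function.iterate_succ_apply',
    Function.iterate_succ_apply]

variable [TopologicalSpace X] [BorelSpace X]

/-- **Krylov–Bogoliubov theorem**. -/
theorem exists_probabilityMeasure_measurePreserving [Nonempty X] [CompactSpace X] [T2Space X]
    [HasOuterApproxClosed X] (hφ : Continuous φ) :
    ∃ μ : ProbabilityMeasure X, MeasurePreserving φ (μ : Measure X) μ := by
  let x : X := Classical.arbitrary X
  let emp (n : ℕ) : ProbabilityMeasure X :=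
    ⟨birkhoffAverage ℝ≥0 φ Measure.dirac (n + 1) x,
      isProbabilityMeasure_birkhoffAverage_dirac n.succ_ne_zero x⟩
  let limit : Ultrafilter (ProbabilityMeasure X) := (hyperfilter ℕ).map emp
  obtain ⟨μ, -, hμ : Tendsto emp (hyperfilter ℕ) (𝓝 μ)⟩ :=
    isCompact_univ.ultrafilter_le_nhds' limit univ_mem
  rw [ProbabilityMeasure.tendsto_iff_forall_integral_tendsto] at hμ
  refine ⟨μ, measurePreserving_of_forall_integral_comp_eq hφ.measurable fun g => ?_⟩
  have hg (f : X →ᵇ ℝ) : StronglyMeasurable f := f.continuous.measurable.stronglyMeasurable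
  have hshift : Tendsto (fun n => ∫ y, g (φ y) ∂(emp n : Measure X) - ∫ y, g y ∂(emp n : Measure X))
      (hyperfilter ℕ) (𝓝 0) := by
    have hzero := ((tendsto_birkhoffAverage_apply_sub_birkhoffAverage' ℝ g.isBounded_range
      φ x).comp (tendsto_add_atTop_nat 1)).mono_left Nat.hyperfilter_le_atTop
    refine hzero.congr fun n => ?_
    simp only [Function.comp_apply, ← birkhoffAverage_comp_self]
    exact congrArg₂ (· - ·)
      (integral_birkhoffAverage_dirac (hg (g.compContinuous ⟨φ, hφ⟩)) _ _).symm
      (integral_birkhoffAverage_dirac (hg g) _ _).symm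
  exact sub_eq_zero.1 <| tendsto_nhds_unique
    ((hμ (g.compContinuous ⟨φ, hφ⟩)).sub (hμ g)) hshift

theorem integral_injective_probabilityMeasure [HasOuterApproxClosed X] :
    Function.Injective fun (μ : ProbabilityMeasure X) (g : X →ᵇ ℝ) => ∫ x, g x ∂(μ : Measure X) :=
  fun _ _ h => ProbabilityMeasure.toMeasure_injective
    (ext_of_forall_integral_eq_of_IsFiniteMeasure (congrFun h))

-- Integration embeds the measures in the locally convex space `(X →ᵇ ℝ) → ℝ`, where the
-- Krein–Milman lemma applies.
theorem extremePoints_coe_probabilityMeasure_nonempty [HasOuterApproxClosed X]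
    {S : Set (ProbabilityMeasure X)} (hS : IsCompact S) (hne : S.Nonempty) :
    (Set.extremePoints ℝ≥0∞ ((↑) '' S : Set (Measure X))).Nonempty := by
  let I (μ : ProbabilityMeasure X) (g : X →ᵇ ℝ) : ℝ := ∫ x, g x ∂(μ : Measure X)
  have hI : Continuous I :=
    continuous_pi ProbabilityMeasure.continuous_integral_boundedContinuousFunction
  obtain ⟨_, ⟨μ, hμ, rfl⟩, hext⟩ := (hS.image hI).extremePoints_nonempty (hne.image I)
  refine ⟨μ, ⟨μ, hμ, rfl⟩, ?_⟩
  rintro _ ⟨μ₁, h₁, rfl⟩ _ ⟨μ₂, h₂, rfl⟩ ⟨a, b, ha, hb, hab, hcomb⟩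
  have ha' : a ≠ ∞ := ne_top_of_le_ne_top ENNReal.one_ne_top (hab ▸ le_self_add)
  have hb' : b ≠ ∞ := ne_top_of_le_ne_top ENNReal.one_ne_top (hab ▸ le_add_self)
  have hsum : a.toReal + b.toReal = 1 := by
    rw [← ENNReal.toReal_add ha' hb', hab, ENNReal.toReal_one]
  have hseg : I μ ∈ openSegment ℝ (I μ₁) (I μ₂) := by
    refine ⟨a.toReal, b.toReal, ENNReal.toReal_pos ha.ne' ha', ENNReal.toReal_pos hb.ne' hb', hsum,
      funext fun g => ?_⟩
    change _ = ∫ x, g x ∂(μ : Measure X)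
    rw [← hcomb, integral_add_measure ((g.integrable _).smul_measure ha')
      ((g.integrable _).smul_measure hb'), integral_smul_measure, integral_smul_measure]
    rfl
  exact congrArg _ <| integral_injective_probabilityMeasure <|
    hext ⟨μ₁, h₁, rfl⟩ ⟨μ₂, h₂, rfl⟩ hseg

theorem isClosed_setOf_measurePreserving [HasOuterApproxClosed X] (hφ : Continuous φ) :
    IsClosed {μ : ProbabilityMeasure X | MeasurePreserving φ (μ : Measure X) μ} := by
  have hset : {μ : ProbabilityMeasure X | MeasurePreserving φ (μ : Measure X) μ} =
      {μ | μ.map hφ.measurable.aemeasurable = μ} := by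
    ext μ
    exact ⟨fun h => Subtype.ext h.map_eq, fun h => ⟨hφ.measurable, congrArg Subtype.val h⟩⟩
  rw [hset]
  exact isClosed_eq (ProbabilityMeasure.continuous_map hφ) continuous_id

theorem exists_ergodic [Nonempty X] [CompactSpace X] [T2Space X]
    [HasOuterApproxClosed X] (hφ : Continuous φ) :
    ∃ μ : Measure X, IsProbabilityMeasure μ ∧ Ergodic φ μ := by
  obtain ⟨μ, hμ⟩ := extremePoints_coe_probabilityMeasure_nonempty
    (isClosed_setOf_measurePreserving hφ).isCompact
    (exists_probabilityMeasure_measurePreserving hφ)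
  have hset : ((↑) '' {μ : ProbabilityMeasure X | MeasurePreserving φ (μ : Measure X) μ} :
      Set (Measure X)) = {ν | MeasurePreserving φ ν ν ∧ IsProbabilityMeasure ν} := by
    ext ν
    exact ⟨fun ⟨ρ, hρ, hρν⟩ => hρν ▸ ⟨hρ, ρ.2⟩, fun ⟨hν, hprob⟩ => ⟨⟨ν, hprob⟩, hν, rfl⟩⟩
  rw [hset] at hμ
  exact ⟨μ, hμ.1.2, .of_mem_extremePoints hμ⟩

theorem exists_ergodic_of_mapsTo [CompactSpace X] [TopologicalSpace.MetrizableSpace X]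
    (hφ : Continuous φ) {K : Set X} (hK : IsClosed K) (hne : K.Nonempty)
    (hmaps : Set.MapsTo φ K K) :
    ∃ μ : Measure X, IsProbabilityMeasure μ ∧ Ergodic φ μ ∧ μ Kᶜ = 0 := by
  have : Nonempty K := hne.to_subtype
  have : CompactSpace K := isCompact_iff_compactSpace.1 hK.isCompact
  let := TopologicalSpace.metrizableSpaceMetric X
  obtain ⟨ν, hprob, herg⟩ := exists_ergodic (hφ.restrict hmaps)
  have hval : MeasurePreserving Subtype.val ν (ν.map Subtype.val) :=
    ⟨measurable_subtype_coe, rfl⟩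
  refine ⟨ν.map Subtype.val, Measure.isProbabilityMeasure_map hval.aemeasurable,
    hval.ergodic_of_ergodic_semiconj herg hφ.measurable fun _ => rfl, ?_⟩
  rw [← hval.measure_preimage hK.measurableSet.compl.nullMeasurableSet]
  simp only [Set.preimage_compl, Subtype.coe_preimage_self, Set.compl_univ, measure_empty]

end ErgodicExistence

/-- Proposition 3.4: if `E(Ω,φ) = E₁(Ω,φ)` (in particular, if the semicascade is tame),
then the closure of the union of all minimal sets equals the closure of the union of the
supports of all `φ`-ergodic Borel probability measures (the minimal attraction center). -/
theorem stmt_14 (φ : Ω → Ω) (hφ : Continuous φ) (h : EllisE φ = E1SG φ) :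
    closure (⋃₀ {m : Set Ω | IsMinimalSet φ m}) =
      closure (⋃₀ {s : Set Ω | ∃ μ : Measure Ω, IsErgodicMeasure φ μ ∧ s = msupp μ}) := by
  let := TopologicalSpace.metrizableSpaceMetric Ω
  refine subset_antisymm (closure_mono ?_) (closure_minimal ?_ isClosed_closure)
  · rintro ω ⟨m, hm, hω⟩
    obtain ⟨μ, hprob, herg, hμm⟩ := exists_ergodic_of_mapsTo hφ hm.2.1 hm.1 hm.2.2.1
    refine ⟨m, ⟨μ, (isErgodicMeasure_iff hφ.measurable).2 ⟨hprob, herg⟩, ?_⟩, hω⟩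
    rw [msupp_eq_support, hm.support_eq hφ herg.toMeasurePreserving hprob.ne_zero hμm]
  · rintro ω ⟨_, ⟨μ, hμ, rfl⟩, hω⟩
    obtain ⟨_, herg⟩ := (isErgodicMeasure_iff hφ.measurable).1 hμ
    obtain ⟨p, hpE, hp⟩ := exists_mem_ellisE_forall_mem_isMinimalSet hφ
    have hpμ : MeasurePreserving p μ μ :=
      measurePreserving_of_mem_E1SG herg.toMeasurePreserving (h ▸ hpE)
    rw [msupp_eq_support] at hω
    exact support_subset_closure_of_measurePreserving hpμ (.of_forall hp) hω
end
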